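/- arXiv:1108.1247 — 3 statements merged into one kernel-verified Lean document; each statement's English description precedes it below -/
import Mathlib

section
/- Let k, ℓ, s be positive integers with k ≥ 4 and s ≥ kℓ. There exists a positive constant c = c(k,s), depending only on k and s, with the following property: if F ⊆ binom([n],k) contains no copy of the k-uniform linear path P^{(k)}_ℓ, then F can be partitioned into subfamilies G_1,…,G_m, F_0 such that for each i ∈ [m], G_i is a (k,s)-homogeneous family whose intersection pattern J_i has rank k−1 and is of type 1, and |F_0| ≤ (1/c)·C(n,k−2). -/
open Finset

/-- The family `F` of k-sets contains a k-uniform linear path of length ℓ: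
distinct members `P 0, …, P (ℓ-1)` with consecutive members meeting in exactly one
vertex and non-consecutive members disjoint. -/
def ContainsLinearPath (k ℓ : ℕ) {n : ℕ} (F : Finset (Finset (Fin n))) : Prop :=
  ∃ P : Fin ℓ → Finset (Fin n), Function.Injective P ∧
    (∀ i, P i ∈ F) ∧ (∀ i, (P i).card = k) ∧
    (∀ i j : Fin ℓ, (i : ℕ) + 1 = (j : ℕ) → (P i ∩ P j).card = 1) ∧
    (∀ i j : Fin ℓ, (i : ℕ) + 1 < (j : ℕ) → P i ∩ P j = ∅)

/-- The finsets in `S` form an s-star (Δ-system) in `G` with kernel `A`: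
`S` consists of `s` members of `G` whose pairwise intersections all equal `A`. -/
def IsStarWithKernel {α : Type*} [DecidableEq α] (G : Finset (Finset α)) (s : ℕ)
    (A : Finset α) (S : Finset (Finset α)) : Prop :=
  S ⊆ G ∧ S.card = s ∧ ∀ E₁ ∈ S, ∀ E₂ ∈ S, E₁ ≠ E₂ → E₁ ∩ E₂ = A

/-- The pattern Π(S) of a set S relative to the partition (X_1, …, X_k):
the set of indices i with S ∩ X_i ≠ ∅. -/
def pattern {k n : ℕ} (X : Fin k → Finset (Fin n)) (S : Finset (Fin n)) : Finset (Fin k) :=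
  Finset.univ.filter fun i => (S ∩ X i).Nonempty

/-- `G` is a (k,s)-homogeneous family with k-partition `X` and intersection pattern `J`:
`X` partitions the vertex set, every member of `G` is a k-set meeting each part in exactly
one vertex, `J` is an intersection-closed family of proper subsets of [k], every member `F`
of `G` has Π(I(F,G)) = J, and every intersection `F ∩ F'` of distinct members is the kernel
of an s-star in `G` containing `F`. -/
def IsHomogeneous (k s : ℕ) {n : ℕ} (G : Finset (Finset (Fin n)))
    (X : Fin k → Finset (Fin n)) (J : Finset (Finset (Fin k))) : Prop :=
  (∀ v : Fin n, ∃! i : Fin k, v ∈ X i) ∧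
  (∀ F ∈ G, F.card = k ∧ ∀ i : Fin k, (F ∩ X i).card = 1) ∧
  (∀ B ∈ J, B ≠ Finset.univ) ∧
  (∀ A ∈ J, ∀ B ∈ J, A ∩ B ∈ J) ∧
  (∀ F ∈ G, (G.erase F).image (fun F' => pattern X (F ∩ F')) = J) ∧
  (∀ F ∈ G, ∀ F' ∈ G, F' ≠ F → ∃ S : Finset (Finset (Fin n)),
      IsStarWithKernel G s (F ∩ F') S ∧ F ∈ S)

/-- The rank of a family `L` of subsets of [k]: the minimum cardinality of a set
`D ⊆ [k]` contained in no member of `L`. -/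
noncomputable def patRank (k : ℕ) (L : Finset (Finset (Fin k))) : ℕ :=
  sInf {p : ℕ | ∃ D : Finset (Fin k), D.card = p ∧ ∀ B ∈ L, ¬ D ⊆ B}

/-- A family `L` of proper subsets of [k] (of rank k-1) is of type 1 if there is an
`x ∈ [k]` with `[k] ∖ {x} ∉ L` but `[k] ∖ {y} ∈ L` for every `y ≠ x`. -/
def IsType1 {k : ℕ} (L : Finset (Finset (Fin k))) : Prop :=
  ∃ x : Fin k, Finset.univ.erase x ∉ L ∧ ∀ y : Fin k, y ≠ x → Finset.univ.erase y ∈ L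

/-!
By Füredi's intersection semilattice lemma every family `F` of `k`-sets has a homogeneous subfamily
of size at least `c * #F`: restrict to the rainbow sets of a good colouring and then, while some
pattern `A` is not the pattern of enough kernels of stars, pass to a large part of the family in
which no two members meet in a set with pattern `A`.

If a homogeneous family has more than `n.choose (k - 2)` members, then its pattern `J` covers every
`(k - 2)`-subset of `[k]`, as otherwise its members would be determined by `k - 2` of their
vertices. Let `M` be the set of those `x` with `[k] \ {x} ∉ J`. If `#M = 1`, then `J` has rank
`k - 1` and type 1. Otherwise `J` contains two singletons `{a}` and `{b}`, since it is closed under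
intersection and contains `[k] \ {x}` for `x ∉ M` and `[k] \ {x, y}` for distinct `x, y ∈ M`. Stars
with kernels of colours `a` and `b` alternately then yield a linear path greedily. So as long as
`F` is large, a homogeneous subfamily of type 1 can be split off.
-/

section Star

variable {α : Type*} [DecidableEq α] {G H R S : Finset (Finset α)} {s t : ℕ}
  {F K L U : Finset α}

namespace IsStarWithKernel

theorem mono (h : IsStarWithKernel G s K S) (hGH : G ⊆ H) : IsStarWithKernel H s K S :=
  ⟨h.1.trans hGH, h.2⟩

theorem kernel_subset (h : IsStarWithKernel G s K S) (hs : 2 ≤ s) (hF : F ∈ S) : K ⊆ F := by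
  obtain ⟨-, hcard, hinter⟩ := h
  obtain ⟨E, hE, hne⟩ := exists_mem_ne (by omega : 1 < #S) F
  exact hinter E hE F hF hne ▸ inter_subset_right

theorem of_subset (h : IsStarWithKernel G s K S) (hRS : R ⊆ S) :
    IsStarWithKernel G #R K R :=
  ⟨hRS.trans h.1, rfl, fun E₁ h₁ E₂ h₂ => h.2.2 E₁ (hRS h₁) E₂ (hRS h₂)⟩

theorem exists_smaller_star (h : IsStarWithKernel G t K S) (hF : F ∈ S) (hs : 1 ≤ s)
    (hst : s ≤ t) : ∃ R, IsStarWithKernel G s K R ∧ F ∈ R := by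
  obtain ⟨R, hFR, hRS, rfl⟩ := exists_subsuperset_card_eq (singleton_subset_iff.2 hF)
    (by simpa using hs) (hst.trans_eq h.2.1.symm)
  exact ⟨R, h.of_subset hRS, singleton_subset_iff.1 hFR⟩

/-- The petals `E \ K` are pairwise disjoint, so fewer than `s` vertices cannot meet them all. -/
theorem exists_inter_subset_kernel (h : IsStarWithKernel G s K S) (hU : #U < s) :
    ∃ E ∈ S, E ∩ U ⊆ K := by
  by_contra! hmeet
  refine (hU.trans_eq h.2.1.symm).not_ge ?_
  refine card_le_card_of_forall_subsingleton (fun E v => v ∈ E ∧ v ∉ K) (fun E hE => ?_) ?_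
  · obtain ⟨v, hv, hvK⟩ := not_subset.1 (hmeet E hE)
    exact ⟨v, (mem_inter.1 hv).2, (mem_inter.1 hv).1, hvK⟩
  · rintro v - E ⟨hE, hvE, hvK⟩ E' ⟨hE', hvE', -⟩
    by_contra hne
    exact hvK (h.2.2 E hE E' hE' hne ▸ mem_inter.2 ⟨hvE, hvE'⟩)

theorem exists_inter_eq_inter_kernels (hS : IsStarWithKernel G s K S)
    (hR : IsStarWithKernel H s L R) (hs : 2 ≤ s) (hL : #L < s) (hcard : ∀ E ∈ S, #E < s) :
    ∃ E ∈ S, ∃ E' ∈ R, E ∩ E' = K ∩ L := by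
  obtain ⟨E, hE, hEL⟩ := hS.exists_inter_subset_kernel hL
  obtain ⟨E', hE', hEE'⟩ := hR.exists_inter_subset_kernel (hcard E hE)
  refine ⟨E, hE, E', hE', Subset.antisymm (fun v hv => ?_)
    (inter_subset_inter (hS.kernel_subset hs hE) (hR.kernel_subset hs hE'))⟩
  obtain ⟨hvE, hvE'⟩ := mem_inter.1 hv
  have hvL : v ∈ L := hEE' (mem_inter.2 ⟨hvE', hvE⟩)
  exact mem_inter.2 ⟨hEL (mem_inter.2 ⟨hvE, hvL⟩), hvL⟩

end IsStarWithKernel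

/-- The cover is the union of the petals of a maximal star with kernel `K`. -/
theorem exists_cover_of_forall_not_isStarWithKernel {k : ℕ} (hcard : ∀ F ∈ G, #F ≤ k)
    (hK : ∀ F ∈ G, K ⊂ F) (hstar : ∀ S, ¬ IsStarWithKernel G s K S) :
    ∃ U, Disjoint U K ∧ #U ≤ s * k ∧ ∀ F ∈ G, ¬ Disjoint F U := by
  classical
  let IsSubstar (S : Finset (Finset α)) : Prop :=
    (S : Set (Finset α)).Pairwise fun E₁ E₂ => E₁ ∩ E₂ = K
  obtain ⟨S, hS⟩ := (G.powerset.filter IsSubstar).exists_maximal ⟨∅, by simp [IsSubstar]⟩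
  simp only [mem_filter, mem_powerset, IsSubstar] at hS
  obtain ⟨⟨hSG, hSK⟩, hmax⟩ := hS
  have hSs : #S ≤ s := by
    by_contra! hlt
    obtain ⟨R, hRS, hR⟩ := exists_subset_card_eq hlt.le
    exact hstar R ⟨hRS.trans hSG, hR, fun E₁ h₁ E₂ h₂ => hSK (hRS h₁) (hRS h₂)⟩
  refine ⟨S.biUnion (· \ K), ?_, ?_, fun F hF hdisj => ?_⟩
  · exact (disjoint_biUnion_left ..).2 fun E _ => sdiff_disjoint
  · exact (card_biUnion_le_card_mul S _ k fun E hE =>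
      (card_le_card sdiff_subset).trans (hcard E (hSG hE))).trans (Nat.mul_le_mul_right k hSs)
  · rw [disjoint_biUnion_right] at hdisj
    have hFS : F ∈ S := by
      refine hmax ⟨insert_subset hF hSG, ?_⟩ (subset_insert F S) (mem_insert_self F S)
      have hsymm : Std.Symm fun E₁ E₂ : Finset α => E₁ ∩ E₂ = K :=
        ⟨fun E₁ E₂ h => inter_comm E₁ E₂ ▸ h⟩
      rw [coe_insert, Set.pairwise_insert_of_symm]
      refine ⟨hSK, fun E hE _ => Subset.antisymm (fun v hv => ?_)
        (subset_inter (hK F hF).1 (hK E (hSG hE)).1)⟩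
      obtain ⟨hvF, hvE⟩ := mem_inter.1 hv
      by_contra hvK
      exact disjoint_left.1 (hdisj E hE) hvF (mem_sdiff.2 ⟨hvE, hvK⟩)
    obtain ⟨v, hvF, hvK⟩ := exists_of_ssubset (hK F hF)
    exact disjoint_left.1 (hdisj F hFS) hvF (mem_sdiff.2 ⟨hvF, hvK⟩)

theorem exists_subfamily_inter_ne_of_forall_not_isStarWithKernel {k : ℕ}
    (hcard : ∀ F ∈ G, #F ≤ k) (hK : ∀ F ∈ G, K ⊂ F)
    (hstar : ∀ S, ¬ IsStarWithKernel G s K S) :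
    ∃ G' ⊆ G, #G ≤ s * k * #G' ∧ ∀ F ∈ G', ∀ F' ∈ G', F ∩ F' ≠ K := by
  obtain ⟨U, hUK, hU, hcover⟩ := exists_cover_of_forall_not_isStarWithKernel hcard hK hstar
  obtain rfl | ⟨F₀, hF₀⟩ := G.eq_empty_or_nonempty
  · exact ⟨∅, by simp⟩
  obtain ⟨u₀, -, hu₀⟩ := not_disjoint_iff.1 (hcover F₀ hF₀)
  obtain ⟨u, hu, hmax⟩ := U.exists_max_image (fun u => #{F ∈ G | u ∈ F}) ⟨u₀, hu₀⟩
  refine ⟨{F ∈ G | u ∈ F}, filter_subset _ _, ?_, fun F hF F' hF' hFF' => ?_⟩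
  · have hG : G ⊆ U.biUnion fun u => {F ∈ G | u ∈ F} := fun F hF => by
      obtain ⟨v, hvF, hvU⟩ := not_disjoint_iff.1 (hcover F hF)
      exact mem_biUnion.2 ⟨v, hvU, mem_filter.2 ⟨hF, hvF⟩⟩
    calc #G ≤ #(U.biUnion fun u => {F ∈ G | u ∈ F}) := card_le_card hG
      _ ≤ #U * #{F ∈ G | u ∈ F} := card_biUnion_le_card_mul _ _ _ hmax
      _ ≤ s * k * #{F ∈ G | u ∈ F} := Nat.mul_le_mul_right _ hU
  · have huK : u ∈ K := hFF' ▸ mem_inter.2 ⟨(mem_filter.1 hF).2, (mem_filter.1 hF').2⟩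
    exact disjoint_left.1 hUK hu huK

end Star

section Peeling

variable {β τ : Type*} [DecidableEq β]

/-- As long as some member lies in no configuration of some type `A`, move it to `B A`. A
configuration of type `A` inside `B A` would contradict the moment its first member was moved. -/
theorem exists_core_and_configuration_free (𝒞 : τ → Finset β → Prop) (T : Finset τ)
    (G : Finset β) :
    ∃ H ⊆ G, ∃ B : τ → Finset β, (∀ A, B A ⊆ G) ∧ G ⊆ H ∪ T.biUnion B ∧
      (∀ F ∈ H, ∀ A ∈ T, ∃ S ⊆ H, F ∈ S ∧ 𝒞 A S) ∧
      ∀ A, ∀ S ⊆ B A, S.Nonempty → ¬ 𝒞 A S := by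
  classical
  induction G using Finset.strongInduction with
  | H G ih =>
    by_cases hcore : ∀ F ∈ G, ∀ A ∈ T, ∃ S ⊆ G, F ∈ S ∧ 𝒞 A S
    · refine ⟨G, Subset.rfl, fun _ => ∅, by simp, subset_union_left, hcore, ?_⟩
      rintro A S hS ⟨E, hE⟩
      exact absurd (hS hE) (notMem_empty E)
    push Not at hcore
    obtain ⟨F, hF, A, hA, hbad⟩ := hcore
    obtain ⟨H, hHG, B, hBG, hcover, hH, hB⟩ := ih (G.erase F) (erase_ssubset hF)
    have hins : insert F (B A) ⊆ G :=
      insert_subset hF ((hBG A).trans (erase_subset F G))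
    refine ⟨H, hHG.trans (erase_subset F G), Function.update B A (insert F (B A)), ?_, ?_, hH, ?_⟩
    · refine (Function.forall_update_iff B fun _ C => C ⊆ G).2
        ⟨hins, fun A' _ => (hBG A').trans (erase_subset F G)⟩
    · have hmono : ∀ A', B A' ⊆ Function.update B A (insert F (B A)) A' :=
        (Function.forall_update_iff B fun A' C => B A' ⊆ C).2
          ⟨subset_insert F (B A), fun _ _ => Subset.rfl⟩
      intro E hE
      obtain rfl | hne := eq_or_ne E F
      · exact mem_union_right _ (mem_biUnion.2 ⟨A, hA, by simp⟩)
      · exact union_subset_union_right (biUnion_mono fun A' _ => hmono A')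
          (hcover (mem_erase.2 ⟨hne, hE⟩))
    · refine (Function.forall_update_iff B
        fun A' C => ∀ S ⊆ C, S.Nonempty → ¬ 𝒞 A' S).2
          ⟨fun S hS hne hconf => ?_, fun A' _ => hB A'⟩
      by_cases hFS : F ∈ S
      · exact hbad S (hS.trans hins) hFS hconf
      · exact hB A S ((subset_insert_iff_of_notMem hFS).1 hS) hne hconf

theorem card_le_mul_or_exists_card_le_mul {T : Finset τ} {G H : Finset β} {B : τ → Finset β}
    (hG : G ⊆ H ∪ T.biUnion B) :
    #G ≤ (#T + 1) * #H ∨ ∃ A ∈ T, #G ≤ (#T + 1) * #(B A) := by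
  by_contra! hcon
  obtain ⟨hH, hB⟩ := hcon
  have hsum : (#T + 1) * ∑ A ∈ T, #(B A) ≤ #T * #G := by
    rw [mul_sum]
    exact sum_le_card_nsmul T _ _ fun A hA => (hB A hA).le
  have hcard : #G ≤ #H + ∑ A ∈ T, #(B A) :=
    (card_le_card hG).trans ((card_union_le _ _).trans (Nat.add_le_add_left card_biUnion_le _))
  nlinarith

end Peeling

/-- `F` is rainbow under the colouring `χ`: it contains exactly one vertex of each colour.
Colourings `χ : α → ι` encode the partitions `(X_i)` of the vertex set, and `S.image χ` is then the
pattern of `S`. -/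
def IsRainbow {α ι : Type*} (χ : α → ι) (F : Finset α) : Prop :=
  Set.BijOn χ F Set.univ

/-- The colour form of homogeneity: distinct members of `H` meet in a set with pattern in `J`, and
every member of `H` lies, for each `A ∈ J`, in an `s`-star of `H` whose kernel has pattern `A`. -/
structure IsColorHomogeneous {α ι : Type*} [DecidableEq α] [DecidableEq ι] (s : ℕ) (χ : α → ι)
    (J : Finset (Finset ι)) (H : Finset (Finset α)) : Prop where
  image_inter_mem : ∀ F ∈ H, ∀ F' ∈ H, F ≠ F' → (F ∩ F').image χ ∈ J
  exists_star : ∀ F ∈ H, ∀ A ∈ J, ∃ S K, IsStarWithKernel H s K S ∧ F ∈ S ∧ K.image χ = A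

section Coloring

variable {α ι : Type*} [Fintype ι] {F : Finset α}

theorem IsRainbow.card_eq {χ : α → ι} (hF : IsRainbow χ F) : #F = Fintype.card ι :=
  card_nbij χ (fun _ _ => mem_univ _) hF.injOn (by simpa using hF.surjOn)

theorem two_le_of_ne_univ_of_card_lt {A : Finset ι} {s : ℕ} (hA : A ≠ univ)
    (hs : Fintype.card ι < s) : 2 ≤ s :=
  (Nat.succ_le_of_lt (Nat.zero_lt_of_lt ((card_lt_iff_ne_univ A).2 hA))).trans_lt hs

open scoped Classical in
theorem pow_le_card_filter_isRainbow [Fintype α] (hF : #F = Fintype.card ι) :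
    Fintype.card ι ^ (Fintype.card α - Fintype.card ι) ≤
      #{χ : α → ι | IsRainbow χ F} := by
  obtain e : F ≃ ι := Fintype.equivOfCardEq (by simpa using hF)
  let extend (g : {v // v ∉ F} → ι) (v : α) : ι := if h : v ∈ F then e ⟨v, h⟩ else g ⟨v, h⟩
  have hextend : Function.Injective extend := fun g g' hgg' => funext fun v => by
    simpa [extend, v.2] using congrFun hgg' v
  have hrainbow : ∀ g, IsRainbow (extend g) F := by
    refine fun g => ⟨Set.mapsTo_univ _ _, fun v hv w hw hvw => ?_, fun i _ => ?_⟩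
    · simpa [extend, mem_coe.1 hv, mem_coe.1 hw] using hvw
    · exact ⟨e.symm i, (e.symm i).2, by simp [extend]⟩
  calc Fintype.card ι ^ (Fintype.card α - Fintype.card ι)
      = #(univ : Finset ({v // v ∉ F} → ι)) := by simp [hF]
    _ ≤ #{χ : α → ι | IsRainbow χ F} :=
      card_le_card_of_injOn extend (fun g _ => by simpa using hrainbow g) hextend.injOn

/-- Average over all colourings. -/
theorem exists_coloring_many_rainbow [Finite α] [Nonempty ι]
    {G : Finset (Finset α)} (hG : ∀ F ∈ G, #F = Fintype.card ι) :
    ∃ χ : α → ι, ∃ G' ⊆ G, (∀ F ∈ G', IsRainbow χ F) ∧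
      #G ≤ Fintype.card ι ^ Fintype.card ι * #G' := by
  classical
  have := Fintype.ofFinite α
  set k := Fintype.card ι
  set n := Fintype.card α
  obtain rfl | ⟨F₀, hF₀⟩ := G.eq_empty_or_nonempty
  · exact ⟨fun _ => Classical.arbitrary ι, ∅, by simp⟩
  have hkn : k ≤ n := hG F₀ hF₀ ▸ card_le_univ F₀
  obtain ⟨χ, -, hmax⟩ := exists_max_image (univ : Finset (α → ι))
    (fun χ => #{F ∈ G | IsRainbow χ F}) univ_nonempty
  refine ⟨χ, {F ∈ G | IsRainbow χ F}, filter_subset _ _, fun F hF => (mem_filter.1 hF).2, ?_⟩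
  have hcount : #G * k ^ (n - k) ≤ k ^ n * #{F ∈ G | IsRainbow χ F} := by
    simpa [k, n] using card_mul_le_card_mul (s := G) (t := univ)
      (fun F (χ : α → ι) => IsRainbow χ F)
      (fun F hF => pow_le_card_filter_isRainbow (hG F hF)) hmax
  refine Nat.le_of_mul_le_mul_right ?_ (pow_pos Fintype.card_pos (n - k) : 0 < k ^ (n - k))
  calc #G * k ^ (n - k) ≤ k ^ n * #{F ∈ G | IsRainbow χ F} := hcount
    _ = k ^ k * #{F ∈ G | IsRainbow χ F} * k ^ (n - k) := by
      rw [← Nat.add_sub_cancel' hkn, pow_add]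
      simp only [Nat.add_sub_cancel_left]
      ring

end Coloring

section Rainbow

variable {α ι : Type*} [DecidableEq ι] {χ : α → ι} {F F' K : Finset α} {A : Finset ι}

theorem filter_mem_image_eq_of_injOn (hF : Set.InjOn χ F) (hK : K ⊆ F) :
    F.filter (χ · ∈ K.image χ) = K := by
  ext v
  simp only [mem_filter, mem_image]
  refine ⟨?_, fun hv => ⟨hK hv, v, hv, rfl⟩⟩
  rintro ⟨hv, w, hw, hwv⟩
  exact hF (hK hw) hv hwv ▸ hw

namespace IsRainbow

theorem filter_mem_eq (hF : IsRainbow χ F) (hK : K ⊆ F) (hA : K.image χ = A) :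
    F.filter (χ · ∈ A) = K :=
  hA ▸ filter_mem_image_eq_of_injOn hF.injOn hK

theorem image_filter_mem (hF : IsRainbow χ F) (A : Finset ι) :
    (F.filter (χ · ∈ A)).image χ = A := by
  refine Subset.antisymm (image_subset_iff.2 fun v hv => (mem_filter.1 hv).2) fun i hi => ?_
  obtain ⟨v, hv, rfl⟩ := hF.surjOn (Set.mem_univ i)
  exact mem_image.2 ⟨v, mem_filter.2 ⟨hv, hi⟩, rfl⟩

variable [Fintype ι]

theorem image_eq_univ (hF : IsRainbow χ F) : F.image χ = univ := by
  simpa using hF.image_filter_mem univ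

theorem image_inter_ne_univ [DecidableEq α] (hF : IsRainbow χ F) (hF' : IsRainbow χ F')
    (hne : F ≠ F') : (F ∩ F').image χ ≠ univ := by
  intro huniv
  have hinter : F = F ∩ F' := by simpa using hF.filter_mem_eq inter_subset_left huniv
  exact hne (eq_of_subset_of_card_le (inter_eq_left.1 hinter.symm)
    (by rw [hF.card_eq, hF'.card_eq]))

end IsRainbow

/-- The members with a common `A`-coloured part `K` are thinned separately for each `K`; members
from different classes cannot meet in a set with pattern `A`. -/
theorem exists_subfamily_image_inter_ne [DecidableEq α] [Fintype ι] {G : Finset (Finset α)} {s : ℕ}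
    (hG : ∀ F ∈ G, IsRainbow χ F) (hA : A ≠ univ)
    (hstar : ∀ S K, IsStarWithKernel G s K S → K.image χ ≠ A) :
    ∃ G' ⊆ G, #G ≤ s * Fintype.card ι * #G' ∧
      ∀ F ∈ G', ∀ F' ∈ G', (F ∩ F').image χ ≠ A := by
  let part (F : Finset α) : Finset α := F.filter (χ · ∈ A)
  have hthin : ∀ K ∈ G.image part, ∃ G' ⊆ G.filter (part · = K),
      #(G.filter (part · = K)) ≤ s * Fintype.card ι * #G' ∧
        ∀ F ∈ G', ∀ F' ∈ G', F ∩ F' ≠ K := by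
    intro K hK
    obtain ⟨F₀, hF₀, rfl⟩ := mem_image.1 hK
    have himage : (part F₀).image χ = A := (hG F₀ hF₀).image_filter_mem A
    refine exists_subfamily_inter_ne_of_forall_not_isStarWithKernel
      (fun F hF => (hG F (mem_filter.1 hF).1).card_eq.le) (fun F hF => ?_)
      fun S hS => hstar S _ (hS.mono (filter_subset _ _)) himage
    obtain ⟨hF, hpart⟩ := mem_filter.1 hF
    refine hpart ▸ (filter_subset _ _).ssubset_of_ne fun heq => hA ?_
    rw [← (hG F hF).image_filter_mem A, heq, (hG F hF).image_eq_univ]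
  choose! thin hsub hcard hinter using hthin
  refine ⟨(G.image part).biUnion thin,
    biUnion_subset.2 fun K hK => (hsub K hK).trans (filter_subset _ _), ?_, ?_⟩
  · rw [card_biUnion, mul_sum, card_eq_sum_card_image part G]
    · exact sum_le_sum hcard
    · refine fun K hK L hL hKL => disjoint_left.2 fun F hFK hFL => hKL ?_
      rw [← (mem_filter.1 (hsub K hK hFK)).2, (mem_filter.1 (hsub L hL hFL)).2]
  · intro F hF F' hF' himage
    obtain ⟨K, hK, hFK⟩ := mem_biUnion.1 hF
    obtain ⟨L, hL, hFL⟩ := mem_biUnion.1 hF'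
    obtain ⟨hFG, hpart⟩ := mem_filter.1 (hsub K hK hFK)
    obtain ⟨hFG', hpart'⟩ := mem_filter.1 (hsub L hL hFL)
    have hFF'K : F ∩ F' = K :=
      hpart ▸ ((hG F hFG).filter_mem_eq inter_subset_left himage).symm
    have hFF'L : F ∩ F' = L :=
      hpart' ▸ ((hG F' hFG').filter_mem_eq inter_subset_right himage).symm
    obtain rfl : K = L := hFF'K.symm.trans hFF'L
    exact hinter K hK F hFK F' hFL hFF'K

end Rainbow

section ColorHomogeneous

variable {α ι : Type*} [DecidableEq α] [DecidableEq ι] [Fintype ι] {s : ℕ} {χ : α → ι}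

/-- Peel `G` along the patterns in `T`. Either the core is large, and then it is homogeneous with
pattern `T`, or some star-free part is large, and thinning it removes a pattern from `T`. -/
theorem exists_isColorHomogeneous_subfamily [Nonempty ι] (hs : 1 ≤ s) (T : Finset (Finset ι))
    (hT : ∀ A ∈ T, A ≠ univ) (G : Finset (Finset α)) (hG : ∀ F ∈ G, IsRainbow χ F)
    (hinter : ∀ F ∈ G, ∀ F' ∈ G, F ≠ F' → (F ∩ F').image χ ∈ T) :
    ∃ H ⊆ G, ∃ J ⊆ T, IsColorHomogeneous s χ J H ∧
      #G ≤ (#T + 1).factorial * (s * Fintype.card ι) ^ #T * #H := by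
  induction hN : #T generalizing T G with
  | zero =>
    obtain rfl := card_eq_zero.1 hN
    exact ⟨G, Subset.rfl, ∅, Subset.rfl, ⟨hinter, by simp⟩, by simp⟩
  | succ N ih =>
    have hpos : 0 < s * Fintype.card ι := Nat.mul_pos hs Fintype.card_pos
    obtain ⟨H, hHG, B, hBG, hcover, hH, hB⟩ := exists_core_and_configuration_free
      (fun A S => ∃ K, IsStarWithKernel S s K S ∧ K.image χ = A) T G
    obtain hbig | ⟨A, hA, hbig⟩ := card_le_mul_or_exists_card_le_mul hcover
    · refine ⟨H, hHG, T, Subset.rfl,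
        ⟨fun F hF F' hF' => hinter F (hHG hF) F' (hHG hF'), fun F hF A hA => ?_⟩, ?_⟩
      · obtain ⟨S, hSH, hFS, K, hS, hK⟩ := hH F hF A hA
        exact ⟨S, K, hS.mono hSH, hFS, hK⟩
      · refine hbig.trans (Nat.mul_le_mul_right _ ?_)
        rw [hN]
        exact (Nat.self_le_factorial _).trans (Nat.le_mul_of_pos_right _ (pow_pos hpos _))
    · have hstar : ∀ S K, IsStarWithKernel (B A) s K S → K.image χ ≠ A := fun S K hS hK =>
        hB A S hS.1 (card_pos.1 (hS.2.1 ▸ hs)) ⟨K, ⟨Subset.rfl, hS.2⟩, hK⟩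
      obtain ⟨G', hG'B, hthin, hne⟩ := exists_subfamily_image_inter_ne
        (fun F hF => hG F (hBG A hF)) (hT A hA) hstar
      have hG'G : G' ⊆ G := hG'B.trans (hBG A)
      obtain ⟨H', hH'G', J, hJT, hom, hcard⟩ := ih (T.erase A)
        (fun A' hA' => hT A' (mem_of_mem_erase hA')) G' (fun F hF => hG F (hG'G hF))
        (fun F hF F' hF' hFF' => mem_erase.2
          ⟨hne F hF F' hF', hinter F (hG'G hF) F' (hG'G hF') hFF'⟩)
        (by rw [card_erase_of_mem hA, hN, Nat.add_sub_cancel])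
      refine ⟨H', hH'G'.trans hG'G, J, hJT.trans (erase_subset A T), hom, ?_⟩
      calc #G ≤ (N + 1 + 1) * #(B A) := hN ▸ hbig
        _ ≤ (N + 1 + 1) * (s * Fintype.card ι *
            ((N + 1).factorial * (s * Fintype.card ι) ^ N * #H')) :=
          Nat.mul_le_mul_left _ (hthin.trans (Nat.mul_le_mul_left _ hcard))
        _ = (N + 1 + 1).factorial * (s * Fintype.card ι) ^ (N + 1) * #H' := by
          rw [Nat.factorial_succ (N + 1), pow_succ]
          ring

theorem IsColorHomogeneous.inter_mem {J : Finset (Finset ι)} {H : Finset (Finset α)}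
    (h : IsColorHomogeneous s χ J H) (hH : ∀ F ∈ H, IsRainbow χ F) (hne : H.Nonempty)
    (hs : Fintype.card ι < s) (hJ : ∀ A ∈ J, A ≠ univ) {A B : Finset ι} (hA : A ∈ J)
    (hB : B ∈ J) : A ∩ B ∈ J := by
  obtain ⟨F, hF⟩ := hne
  obtain ⟨S, K, hS, hFS, rfl⟩ := h.exists_star F hF A hA
  obtain ⟨R, L, hR, hFR, rfl⟩ := h.exists_star F hF B hB
  have hs2 : 2 ≤ s := two_le_of_ne_univ_of_card_lt (hJ _ hA) hs
  have hKF : K ⊆ F := hS.kernel_subset hs2 hFS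
  have hLF : L ⊆ F := hR.kernel_subset hs2 hFR
  obtain ⟨E, hE, E', hE', hEE'⟩ := hS.exists_inter_eq_inter_kernels hR hs2
    (((card_le_card hLF).trans_eq (hH F hF).card_eq).trans_lt hs)
    fun E hE => (hH E (hS.1 hE)).card_eq.trans_lt hs
  have himage : (E ∩ E').image χ = K.image χ ∩ L.image χ := by
    rw [hEE', image_inter_of_injOn K L ((hH F hF).injOn.mono (by simp [hKF, hLF]))]
  have hEne : E ≠ E' := by
    rintro rfl
    rw [inter_self, (hH E (hS.1 hE)).image_eq_univ] at himage
    exact hJ _ hA (univ_subset_iff.1 (himage ▸ inter_subset_left))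
  exact himage ▸ h.image_inter_mem E (hS.1 hE) E' (hR.1 hE') hEne

end ColorHomogeneous

/-- The partition `(X_i)` of the vertex set into the colour classes of `χ`. -/
def colorClasses {k n : ℕ} (χ : Fin n → Fin k) (i : Fin k) : Finset (Fin n) :=
  univ.filter (χ · = i)

section Homogeneous

variable {k n s t : ℕ} {G H : Finset (Finset (Fin n))} {F F' U : Finset (Fin n)}
  {X : Fin k → Finset (Fin n)} {A B : Finset (Fin k)} {J : Finset (Finset (Fin k))}
  {χ : Fin n → Fin k}

theorem mem_pattern {S : Finset (Fin n)} {i : Fin k} :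
    i ∈ pattern X S ↔ (S ∩ X i).Nonempty := by
  simp [pattern]

theorem pattern_colorClasses (S : Finset (Fin n)) :
    pattern (colorClasses χ) S = S.image χ := by
  ext i
  simp [mem_pattern, colorClasses, Finset.Nonempty]

theorem existsUnique_mem_colorClasses (v : Fin n) : ∃! i, v ∈ colorClasses χ i := by
  simp [colorClasses]

theorem IsRainbow.card_inter_colorClasses (hF : IsRainbow χ F) (i : Fin k) :
    #(F ∩ colorClasses χ i) = 1 := by
  have hfilter : F ∩ colorClasses χ i = F.filter (χ · ∈ ({i} : Finset (Fin k))) := by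
    ext v
    simp [colorClasses]
  rw [hfilter, ← card_image_of_injOn (hF.injOn.mono (coe_subset.2 (filter_subset _ F))),
    hF.image_filter_mem, card_singleton]

theorem isHomogeneous_empty (hX : ∀ v, ∃! i, v ∈ X i) : IsHomogeneous k s ∅ X ∅ :=
  ⟨hX, by simp, by simp, by simp, by simp, by simp⟩

theorem IsColorHomogeneous.isHomogeneous (h : IsColorHomogeneous s χ J H)
    (hH : ∀ F ∈ H, IsRainbow χ F) (hne : H.Nonempty) (hs : k < s) (hJ : ∀ A ∈ J, A ≠ univ) :
    IsHomogeneous k s H (colorClasses χ) J := by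
  rw [← Fintype.card_fin k] at hs
  have hs2 : ∀ A ∈ J, 2 ≤ s := fun A hA => two_le_of_ne_univ_of_card_lt (hJ A hA) hs
  refine ⟨existsUnique_mem_colorClasses, fun F hF =>
    ⟨by simpa using (hH F hF).card_eq, (hH F hF).card_inter_colorClasses⟩, hJ,
    fun A hA B hB => h.inter_mem hH hne hs hJ hA hB, fun F hF => ?_,
    fun F hF F' hF' hFF' => ?_⟩
  · ext A
    simp only [pattern_colorClasses, mem_image, mem_erase]
    refine ⟨?_, fun hA => ?_⟩
    · rintro ⟨F', ⟨hFF', hF'⟩, rfl⟩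
      exact h.image_inter_mem F hF F' hF' hFF'.symm
    · obtain ⟨S, K, hS, hFS, hK⟩ := h.exists_star F hF A hA
      obtain ⟨E, hE, hEF⟩ := exists_mem_ne (hS.2.1 ▸ hs2 A hA : 1 < #S) F
      exact ⟨E, ⟨hEF, hS.1 hE⟩, by rw [hS.2.2 F hFS E hE hEF.symm, hK]⟩
  · have hA := h.image_inter_mem F hF F' hF' hFF'.symm
    obtain ⟨S, K, hS, hFS, hK⟩ := h.exists_star F hF _ hA
    have hKF : K ⊆ F := hS.kernel_subset (hs2 _ hA) hFS
    have hKeq : K = F ∩ F' := ((hH F hF).filter_mem_eq hKF hK).symm.trans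
      ((hH F hF).filter_mem_eq inter_subset_left rfl)
    exact ⟨S, hKeq ▸ hS, hFS⟩

namespace IsHomogeneous

theorem mono_star_size (h : IsHomogeneous k t G X J) (hs : 1 ≤ s) (hst : s ≤ t) :
    IsHomogeneous k s G X J := by
  obtain ⟨hX, hpart, hproper, hclosed, hpattern, hstar⟩ := h
  refine ⟨hX, hpart, hproper, hclosed, hpattern, fun F hF F' hF' hne => ?_⟩
  obtain ⟨S, hS, hFS⟩ := hstar F hF F' hF' hne
  exact hS.exists_smaller_star hFS hs hst

theorem existsUnique_part (h : IsHomogeneous k s G X J) (v : Fin n) : ∃! i, v ∈ X i := h.1 v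

theorem card_eq (h : IsHomogeneous k s G X J) (hF : F ∈ G) : #F = k := (h.2.1 F hF).1

theorem card_inter_part (h : IsHomogeneous k s G X J) (hF : F ∈ G) (i : Fin k) :
    #(F ∩ X i) = 1 :=
  (h.2.1 F hF).2 i

theorem ne_univ (h : IsHomogeneous k s G X J) (hA : A ∈ J) : A ≠ univ := h.2.2.1 A hA

theorem inter_mem (h : IsHomogeneous k s G X J) (hA : A ∈ J) (hB : B ∈ J) : A ∩ B ∈ J :=
  h.2.2.2.1 A hA B hB

theorem pattern_inter_mem (h : IsHomogeneous k s G X J) (hF : F ∈ G) (hF' : F' ∈ G)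
    (hne : F ≠ F') : pattern X (F ∩ F') ∈ J :=
  h.2.2.2.2.1 F hF ▸ mem_image_of_mem _ (mem_erase.2 ⟨hne.symm, hF'⟩)

theorem exists_star (h : IsHomogeneous k s G X J) (hF : F ∈ G) (hA : A ∈ J) :
    ∃ S K, IsStarWithKernel G s K S ∧ F ∈ S ∧ K ⊆ F ∧ pattern X K = A := by
  rw [← h.2.2.2.2.1 F hF] at hA
  obtain ⟨F', hF', rfl⟩ := mem_image.1 hA
  obtain ⟨hne, hF'⟩ := mem_erase.1 hF'
  obtain ⟨S, hS, hFS⟩ := h.2.2.2.2.2 F hF F' hF' hne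
  exact ⟨S, F ∩ F', hS, hFS, inter_subset_left, rfl⟩

theorem exists_pattern_inter_eq_avoiding (h : IsHomogeneous k s G X J) (hF : F ∈ G) (hA : A ∈ J)
    (hU : #U + 1 < s) : ∃ E ∈ G, pattern X (F ∩ E) = A ∧ E ∩ U ⊆ F := by
  obtain ⟨S, K, hS, hFS, hKF, rfl⟩ := h.exists_star hF hA
  have hrest : IsStarWithKernel G #(S.erase F) K (S.erase F) := hS.of_subset (erase_subset F S)
  obtain ⟨E, hE, hEU⟩ := hrest.exists_inter_subset_kernel
    (show #U < _ by rw [card_erase_of_mem hFS, hS.2.1]; omega)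
  obtain ⟨hEF, hES⟩ := mem_erase.1 hE
  exact ⟨E, hS.1 hES, by rw [hS.2.2 F hFS E hES hEF.symm], hEU.trans hKF⟩

theorem inter_eq_inter_part_of_pattern (h : IsHomogeneous k s G X J) (hF : F ∈ G) {a : Fin k}
    (ha : pattern X (F ∩ F') = {a}) : F ∩ F' = F ∩ X a := by
  have hsub : F ∩ F' ⊆ F ∩ X a := fun v hv => by
    obtain ⟨i, hi, -⟩ := h.existsUnique_part v
    have hia : i ∈ pattern X (F ∩ F') := mem_pattern.2 ⟨v, mem_inter.2 ⟨hv, hi⟩⟩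
    rw [ha, mem_singleton] at hia
    exact mem_inter.2 ⟨(mem_inter.1 hv).1, hia ▸ hi⟩
  have hnonempty : (F ∩ F').Nonempty :=
    (mem_pattern.1 (ha ▸ mem_singleton_self a)).mono inter_subset_left
  exact eq_of_subset_of_card_le hsub (h.card_inter_part hF a ▸ hnonempty.card_pos)

/-- A member of `G` is determined by its vertices in the parts indexed by `D`. -/
theorem card_le_choose (h : IsHomogeneous k s G X J) {D : Finset (Fin k)}
    (hD : ∀ B ∈ J, ¬ D ⊆ B) : #G ≤ n.choose #D := by
  let trace (F : Finset (Fin n)) : Finset (Fin n) := D.biUnion (F ∩ X ·)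
  have htrace : Set.MapsTo trace G (powersetCard #D (univ : Finset (Fin n))) := fun F hF => by
    rw [mem_coe, mem_powersetCard_univ, card_biUnion, sum_congr rfl fun i _ =>
      h.card_inter_part hF i, sum_const, smul_eq_mul, mul_one]
    exact fun i _ j _ hij => disjoint_left.2 fun v hvi hvj =>
      hij ((h.existsUnique_part v).unique (mem_inter.1 hvi).2 (mem_inter.1 hvj).2)
  have hinj : Set.InjOn trace G := fun F hF F' hF' hFF' => by
    by_contra hne
    refine hD _ (h.pattern_inter_mem hF hF' hne) fun i hi => mem_pattern.2 ?_
    obtain ⟨v, hv⟩ := card_pos.1 (h.card_inter_part hF i ▸ one_pos)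
    have hvF' : v ∈ trace F' := hFF' ▸ mem_biUnion.2 ⟨i, hi, hv⟩
    obtain ⟨j, -, hj⟩ := mem_biUnion.1 hvF'
    obtain ⟨hvF, hvX⟩ := mem_inter.1 hv
    exact ⟨v, mem_inter.2 ⟨mem_inter.2 ⟨hvF, (mem_inter.1 hj).1⟩, hvX⟩⟩
  simpa using card_le_card_of_injOn trace htrace hinj

end IsHomogeneous

end Homogeneous

/-- Füredi's intersection semilattice lemma. -/
theorem exists_isHomogeneous_subfamily (k s : ℕ) (hk : 1 ≤ k) (hs : 1 ≤ s) :
    ∃ c : ℝ, 0 < c ∧ ∀ (n : ℕ) (F : Finset (Finset (Fin n))), (∀ A ∈ F, #A = k) →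
      ∃ G ⊆ F, ∃ X J, IsHomogeneous k s G X J ∧ c * #F ≤ #G := by
  have : Nonempty (Fin k) := ⟨⟨0, hk⟩⟩
  -- Stars of size above `k` are what makes the pattern intersection-closed.
  let t := max s (k + 1)
  let T : Finset (Finset (Fin k)) := univ.erase univ
  have hT : ∀ A ∈ T, A ≠ univ := fun A hA => ne_of_mem_erase hA
  let C := k ^ k * ((#T + 1).factorial * (t * k) ^ #T)
  have : 0 < C := by positivity
  refine ⟨(C : ℝ)⁻¹, by positivity, fun n F hF => ?_⟩
  obtain ⟨χ, G, hGF, hG, hGcard⟩ := exists_coloring_many_rainbow (ι := Fin k)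
    (by simpa using hF)
  obtain ⟨H, hHG, J, hJT, hom, hHcard⟩ := exists_isColorHomogeneous_subfamily (s := t)
    (by omega) T hT G hG fun A hA B hB hne =>
      mem_erase.2 ⟨(hG A hA).image_inter_ne_univ (hG B hB) hne, mem_univ _⟩
  simp only [Fintype.card_fin] at hGcard hHcard
  have hcard : #F ≤ C * #H := by
    calc #F ≤ k ^ k * #G := hGcard
      _ ≤ k ^ k * ((#T + 1).factorial * (t * k) ^ #T * #H) := Nat.mul_le_mul_left _ hHcard
      _ = C * #H := (mul_assoc ..).symm
  have hdense : (C : ℝ)⁻¹ * #F ≤ #H := by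
    rw [inv_mul_le_iff₀ (by positivity)]
    exact_mod_cast hcard
  refine ⟨H, hHG.trans hGF, colorClasses χ, ?_⟩
  obtain rfl | hne := H.eq_empty_or_nonempty
  · exact ⟨∅, isHomogeneous_empty existsUnique_mem_colorClasses, hdense⟩
  · have hhom : IsHomogeneous k t H (colorClasses χ) J := hom.isHomogeneous
      (fun A hA => hG A (hHG hA)) hne (by omega) fun A hA => hT A (hJT hA)
    exact ⟨J, hhom.mono_star_size hs (le_max_left _ _), hdense⟩

/-- A linear path `P 0, …, P t` in `G`, as the initial segment of a sequence, in which `P i` and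
`P (i + 1)` meet in the vertex of `P i` from the part `X (c i)`. -/
structure IsColoredPath {k n : ℕ} (G : Finset (Finset (Fin n))) (X : Fin k → Finset (Fin n))
    (c : ℕ → Fin k) (t : ℕ) (P : ℕ → Finset (Fin n)) : Prop where
  mem : ∀ i ≤ t, P i ∈ G
  inter_succ : ∀ i < t, P i ∩ P (i + 1) = P i ∩ X (c i)
  disjoint : ∀ i j, i + 1 < j → j ≤ t → Disjoint (P i) (P j)

section Path

variable {k ℓ n s t : ℕ} {F G : Finset (Finset (Fin n))} {X : Fin k → Finset (Fin n)}
  {J : Finset (Finset (Fin k))} {c : ℕ → Fin k} {P : ℕ → Finset (Fin n)}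

theorem ContainsLinearPath.mono (h : ContainsLinearPath k ℓ G) (hGF : G ⊆ F) :
    ContainsLinearPath k ℓ F := by
  obtain ⟨P, hinj, hmem, hpath⟩ := h
  exact ⟨P, hinj, fun i => hGF (hmem i), hpath⟩

namespace IsColoredPath

theorem update_succ (hP : IsColoredPath G X c t P) {E : Finset (Fin n)} (hE : E ∈ G)
    (hinter : P t ∩ E = P t ∩ X (c t)) (hdisj : ∀ i < t, Disjoint (P i) E) :
    IsColoredPath G X c (t + 1) (Function.update P (t + 1) E) := by
  have hold : ∀ i ≤ t, Function.update P (t + 1) E i = P i := fun i hi => by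
    rw [Function.update_of_ne (by omega)]
  refine ⟨fun i hi => ?_, fun i hi => ?_, fun i j hij hj => ?_⟩
  · obtain hi | rfl := Nat.le_succ_iff.1 hi
    · exact hold i hi ▸ hP.mem i hi
    · simpa using hE
  · obtain hi | rfl := Nat.lt_succ_iff_lt_or_eq.1 hi
    · rw [hold i hi.le, hold (i + 1) hi, hP.inter_succ i hi]
    · rw [hold i le_rfl, Function.update_self, hinter]
  · obtain hj | rfl := Nat.le_succ_iff.1 hj
    · rw [hold i (by omega), hold j hj]
      exact hP.disjoint i j hij hj
    · rw [hold i (by omega), Function.update_self]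
      exact hdisj i (by omega)

/-- A vertex of `E` on an earlier edge lies on `P t` too, hence on `P (t - 1)`; it would then have
both of the distinct colours `c (t - 1)` and `c t`. -/
theorem disjoint_of_inter_subset (hP : IsColoredPath G X c t P) (hX : ∀ v, ∃! i, v ∈ X i)
    (hc : ∀ i, c i ≠ c (i + 1)) {E : Finset (Fin n)} (hinter : P t ∩ E = P t ∩ X (c t))
    (hsub : E ∩ (range t).biUnion P ⊆ P t) {i : ℕ} (hi : i < t) : Disjoint (P i) E := by
  refine disjoint_left.2 fun v hvi hvE => ?_
  have hvt : v ∈ P t := hsub (mem_inter.2 ⟨hvE, mem_biUnion.2 ⟨i, mem_range.2 hi, hvi⟩⟩)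
  obtain hlt | rfl := (Nat.succ_le_iff.2 hi).lt_or_eq
  · exact disjoint_left.1 (hP.disjoint i t hlt le_rfl) hvi hvt
  · have hvi' : v ∈ P i ∩ X (c i) := hP.inter_succ i hi ▸ mem_inter.2 ⟨hvi, hvt⟩
    have hvt' : v ∈ P (i + 1) ∩ X (c (i + 1)) := hinter ▸ mem_inter.2 ⟨hvt, hvE⟩
    exact hc i ((hX v).unique (mem_inter.1 hvi').2 (mem_inter.1 hvt').2)

theorem containsLinearPath (hP : IsColoredPath G X c t P) (hG : ∀ F ∈ G, #F = k) (hk : 2 ≤ k)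
    (hX : ∀ F ∈ G, ∀ i, #(F ∩ X i) = 1) : ContainsLinearPath k (t + 1) G := by
  have hmem (i : Fin (t + 1)) : P i ∈ G := hP.mem i (by omega)
  have hadjacent (i j : Fin (t + 1)) (hij : (i : ℕ) + 1 = j) : #(P i ∩ P j) = 1 := by
    rw [← hij, hP.inter_succ i (by omega), hX _ (hmem i)]
  have hdistant (i j : Fin (t + 1)) (hij : (i : ℕ) + 1 < j) : P i ∩ P j = ∅ :=
    disjoint_iff_inter_eq_empty.1 (hP.disjoint i j hij (by omega))
  have hne ⦃i j : Fin (t + 1)⦄ (hij : i < j) : P i ≠ P j := by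
    intro heq
    have hcard : #(P i ∩ P j) = k := by rw [← heq, inter_self, hG _ (hmem i)]
    obtain hadj | hdist := (Nat.succ_le_iff.2 (Fin.lt_def.1 hij)).eq_or_lt
    · have := hadjacent i j hadj
      omega
    · rw [hdistant i j hdist, card_empty] at hcard
      omega
  exact ⟨fun i => P i, Function.injective_iff_pairwise_ne.2 (.of_lt @hne), hmem,
    fun i => hG _ (hmem i), hadjacent, hdistant⟩

end IsColoredPath

theorem IsHomogeneous.exists_isColoredPath (h : IsHomogeneous k s G X J) (hG : G.Nonempty)
    (hcJ : ∀ i, {c i} ∈ J) (hc : ∀ i, c i ≠ c (i + 1)) (hs : k * (t + 1) ≤ s) :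
    ∃ P, IsColoredPath G X c t P := by
  have hk : 0 < k := (c 0).pos
  induction t with
  | zero =>
    obtain ⟨F, hF⟩ := hG
    exact ⟨fun _ => F, fun _ _ => hF, fun i hi => by omega, fun i j hij hj => by omega⟩
  | succ t ih =>
    obtain ⟨P, hP⟩ := ih (by nlinarith)
    have hcard : #((range t).biUnion P) ≤ t * k := by
      simpa using card_biUnion_le_card_mul (range t) P k
        fun i hi => (h.card_eq (hP.mem i (mem_range.1 hi).le)).le
    obtain ⟨E, hE, hpattern, hsub⟩ := h.exists_pattern_inter_eq_avoiding (hP.mem t le_rfl) (hcJ t)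
      (show #((range t).biUnion P) + 1 < s by nlinarith)
    have hinter := h.inter_eq_inter_part_of_pattern (hP.mem t le_rfl) hpattern
    exact ⟨_, hP.update_succ hE hinter fun i hi =>
      hP.disjoint_of_inter_subset h.existsUnique_part hc hinter hsub hi⟩

theorem IsHomogeneous.containsLinearPath (h : IsHomogeneous k s G X J) (hG : G.Nonempty)
    (hs : k * ℓ ≤ s) {a b : Fin k} (hab : a ≠ b) (ha : {a} ∈ J) (hb : {b} ∈ J) :
    ContainsLinearPath k ℓ G := by
  obtain _ | t := ℓ
  · exact ⟨fun i => i.elim0, fun i => i.elim0, fun i => i.elim0, fun i => i.elim0,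
      fun i => i.elim0, fun i => i.elim0⟩
  let c (i : ℕ) : Fin k := if Even i then a else b
  have hcJ (i : ℕ) : {c i} ∈ J := by
    dsimp only [c]
    split_ifs <;> assumption
  have hc (i : ℕ) : c i ≠ c (i + 1) := by
    by_cases hi : Even i
    · simpa [c, hi, Nat.even_add_one] using hab
    · simpa [c, hi, Nat.even_add_one] using hab.symm
  obtain ⟨P, hP⟩ := h.exists_isColoredPath hG hcJ hc hs
  have hk : 2 ≤ k := by
    have := a.isLt
    have := b.isLt
    have := Fin.val_ne_of_ne hab
    omega
  exact hP.containsLinearPath (fun F => h.card_eq) hk fun F => h.card_inter_part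

end Path

/-- The `x` for which the coatom `univ \ {x}` is missing from `J`. -/
def missingCoatoms {ι : Type*} [Fintype ι] [DecidableEq ι] (J : Finset (Finset ι)) : Finset ι :=
  {x | univ.erase x ∉ J}

section Coatoms

variable {ι : Type*} [DecidableEq ι] {J : Finset (Finset ι)}

/-- A minimal member of `J` containing `a` is `{a}`. -/
theorem singleton_mem_of_forall_exists_separating [Nontrivial ι]
    (hJ : ∀ A ∈ J, ∀ B ∈ J, A ∩ B ∈ J) {a : ι} (h : ∀ b, b ≠ a → ∃ A ∈ J, a ∈ A ∧ b ∉ A) :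
    {a} ∈ J := by
  obtain ⟨b₀, hb₀⟩ := exists_ne a
  obtain ⟨A₀, hA₀, haA₀, -⟩ := h b₀ hb₀
  obtain ⟨A, hA⟩ := {A ∈ J | a ∈ A}.exists_minimal ⟨A₀, mem_filter.2 ⟨hA₀, haA₀⟩⟩
  simp only [mem_filter] at hA
  obtain ⟨⟨hAJ, haA⟩, hmin⟩ := hA
  have hAa : A = {a} := by
    refine eq_singleton_iff_unique_mem.2 ⟨haA, fun b hb => ?_⟩
    by_contra hba
    obtain ⟨B, hB, haB, hbB⟩ := h b hba
    exact hbB (mem_of_mem_inter_right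
      (hmin ⟨hJ A hAJ B hB, mem_inter.2 ⟨haA, haB⟩⟩ inter_subset_left hb))
  exact hAa ▸ hAJ

variable [Fintype ι]

theorem mem_missingCoatoms {x : ι} : x ∈ missingCoatoms J ↔ univ.erase x ∉ J := by
  simp [missingCoatoms]

theorem compl_pair_mem_of_mem_missingCoatoms (hproper : ∀ B ∈ J, B ≠ univ) {x y : ι}
    (hx : x ∈ missingCoatoms J) (hy : y ∈ missingCoatoms J) (hcover : ∃ B ∈ J, {x, y}ᶜ ⊆ B) :
    {x, y}ᶜ ∈ J := by
  obtain ⟨B, hB, hsub⟩ := hcover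
  rw [mem_missingCoatoms, ← compl_singleton] at hx hy
  have hBcases : Bᶜ = ∅ ∨ Bᶜ = {x} ∨ Bᶜ = {y} ∨ Bᶜ = {x, y} := by
    have hBsub : Bᶜ ⊆ {x, y} := compl_le_of_compl_le hsub
    grind
  obtain hB' | hB' | hB' | hB' := hBcases
  · exact absurd (compl_eq_empty_iff B |>.1 hB') (hproper B hB)
  · exact absurd (by rwa [← hB', compl_compl]) hx
  · exact absurd (by rwa [← hB', compl_compl]) hy
  · rwa [← hB', compl_compl]

theorem singleton_mem_of_forall_mem_missingCoatoms [Nontrivial ι]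
    (hJ : ∀ A ∈ J, ∀ B ∈ J, A ∩ B ∈ J) (hproper : ∀ B ∈ J, B ≠ univ)
    (hcover : ∀ x y, x ≠ y → ∃ B ∈ J, {x, y}ᶜ ⊆ B) {a : ι}
    (ha : ∀ b ∈ missingCoatoms J, b ≠ a → ∃ d ∈ missingCoatoms J, d ≠ a ∧ d ≠ b) : {a} ∈ J := by
  refine singleton_mem_of_forall_exists_separating hJ fun b hba => ?_
  by_cases hb : b ∈ missingCoatoms J
  · obtain ⟨d, hd, hda, hdb⟩ := ha b hb hba
    exact ⟨_, compl_pair_mem_of_mem_missingCoatoms hproper hb hd (hcover b d hdb.symm),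
      by simp [hba.symm, hda.symm], by simp⟩
  · exact ⟨_, not_not.1 (mt mem_missingCoatoms.2 hb), by simp [hba.symm], by simp⟩

theorem exists_two_singletons_mem (hι : 4 ≤ Fintype.card ι)
    (hJ : ∀ A ∈ J, ∀ B ∈ J, A ∩ B ∈ J) (hproper : ∀ B ∈ J, B ≠ univ)
    (hcover : ∀ x y, x ≠ y → ∃ B ∈ J, {x, y}ᶜ ⊆ B) (hM : #(missingCoatoms J) ≠ 1) :
    ∃ a b, a ≠ b ∧ {a} ∈ J ∧ {b} ∈ J := by
  have : Nontrivial ι := Fintype.one_lt_card_iff_nontrivial.1 (by omega)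
  set M := missingCoatoms J
  obtain hM2 | hM3 := Nat.lt_or_ge #M 3
  · have hsingle : ∀ a ∈ Mᶜ, {a} ∈ J := fun a ha => by
      refine singleton_mem_of_forall_mem_missingCoatoms hJ hproper hcover fun b hb _ => ?_
      have hMpos : 0 < #M := card_pos.2 ⟨b, hb⟩
      obtain ⟨d, hd, hdb⟩ := exists_mem_ne (by omega : 1 < #M) b
      exact ⟨d, hd, ne_of_mem_of_not_mem hd (mem_compl.1 ha), hdb⟩
    obtain ⟨a, ha, b, hb, hab⟩ := one_lt_card.1 (by rw [card_compl]; omega : 1 < #Mᶜ)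
    exact ⟨a, b, hab, hsingle a ha, hsingle b hb⟩
  · have hsingle (a : ι) : {a} ∈ J := by
      refine singleton_mem_of_forall_mem_missingCoatoms hJ hproper hcover fun b _ _ => ?_
      obtain ⟨d, hd, hdab⟩ := exists_mem_notMem_of_card_lt_card
        ((card_le_two : #{a, b} ≤ 2).trans_lt hM3)
      simp only [mem_insert, mem_singleton, not_or] at hdab
      exact ⟨d, hd, hdab⟩
    obtain ⟨a, b, hab⟩ := exists_pair_ne ι
    exact ⟨a, b, hab, hsingle a, hsingle b⟩

theorem patRank_eq_sub_one {k : ℕ} {J : Finset (Finset (Fin k))} (hproper : ∀ B ∈ J, B ≠ univ)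
    (hcover : ∀ D : Finset (Fin k), #D = k - 2 → ∃ B ∈ J, D ⊆ B) {x : Fin k}
    (hx : univ.erase x ∉ J) : patRank k J = k - 1 := by
  have hnotCovered : ∀ B ∈ J, ¬ univ.erase x ⊆ B := fun B hB hsub => by
    obtain hxB | hxB := em (x ∈ B)
    · exact hproper B hB (univ_subset_iff.1 (insert_erase (mem_univ x) ▸ insert_subset hxB hsub))
    · exact hx (hsub.antisymm (subset_erase.2 ⟨subset_univ B, hxB⟩) ▸ hB)
  refine IsLeast.csInf_eq ⟨⟨univ.erase x, by simp, hnotCovered⟩, ?_⟩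
  rintro p ⟨D, rfl, hD⟩
  by_contra! hlt
  obtain ⟨D', hDD', -, hD'⟩ := exists_subsuperset_card_eq (subset_univ D)
    (by omega : #D ≤ k - 2) (by simp)
  obtain ⟨B, hB, hsub⟩ := hcover D' hD'
  exact hD B hB (hDD'.trans hsub)

theorem patRank_eq_and_isType1_or_exists_two_singletons_mem {k : ℕ} (hk : 4 ≤ k)
    {J : Finset (Finset (Fin k))} (hJ : ∀ A ∈ J, ∀ B ∈ J, A ∩ B ∈ J)
    (hproper : ∀ B ∈ J, B ≠ univ)
    (hcover : ∀ D : Finset (Fin k), #D = k - 2 → ∃ B ∈ J, D ⊆ B) :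
    (patRank k J = k - 1 ∧ IsType1 J) ∨ ∃ a b : Fin k, a ≠ b ∧ {a} ∈ J ∧ {b} ∈ J := by
  obtain hM | hM := eq_or_ne #(missingCoatoms J) 1
  · obtain ⟨x, hx⟩ := card_eq_one.1 hM
    have hmem (y : Fin k) : univ.erase y ∉ J ↔ y = x := by
      rw [← mem_missingCoatoms, hx, mem_singleton]
    have hxJ := (hmem x).2 rfl
    exact .inl ⟨patRank_eq_sub_one hproper hcover hxJ, x, hxJ,
      fun y hy => not_not.1 (mt (hmem y).1 hy)⟩
  · refine .inr (exists_two_singletons_mem (by simpa using hk) hJ hproper (fun x y hxy => ?_) hM)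
    exact hcover _ (by rw [card_compl, card_pair hxy, Fintype.card_fin])

end Coatoms

/-- The conclusion of the canonical partition theorem: `F` is the disjoint union of finitely many
`(k, s)`-homogeneous families with patterns of rank `k - 1` and type 1, and of a leftover family
with at most `M` members. -/
def HasCanonicalPartition (k s : ℕ) (M : ℝ) {n : ℕ} (F : Finset (Finset (Fin n))) : Prop :=
  ∃ (m : ℕ) (G : Fin m → Finset (Finset (Fin n))) (F₀ : Finset (Finset (Fin n)))
    (X : Fin m → Fin k → Finset (Fin n)) (J : Fin m → Finset (Finset (Fin k))),
    F₀ ∪ univ.biUnion G = F ∧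
    (∀ i, Disjoint (G i) F₀) ∧
    (∀ i j, i ≠ j → Disjoint (G i) (G j)) ∧
    (∀ i, IsHomogeneous k s (G i) (X i) (J i)) ∧
    (∀ i, patRank k (J i) = k - 1 ∧ IsType1 (J i)) ∧
    (#F₀ : ℝ) ≤ M

section Partition

variable {k ℓ n s : ℕ} {M : ℝ} {F G : Finset (Finset (Fin n))} {X : Fin k → Finset (Fin n)}
  {J : Finset (Finset (Fin k))}

theorem hasCanonicalPartition_of_card_le (hF : #F ≤ M) : HasCanonicalPartition k s M F :=
  ⟨0, Fin.elim0, F, Fin.elim0, Fin.elim0, by simp, by simp, by simp, by simp, by simp, hF⟩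

theorem HasCanonicalPartition.of_sdiff (h : HasCanonicalPartition k s M (F \ G)) (hGF : G ⊆ F)
    (hG : IsHomogeneous k s G X J) (hJ : patRank k J = k - 1 ∧ IsType1 J) :
    HasCanonicalPartition k s M F := by
  obtain ⟨m, G', F₀, X', J', hunion, hdisj₀, hdisj, hhom, htype, hcard⟩ := h
  have hGsdiff : Disjoint G (F₀ ∪ univ.biUnion G') := hunion ▸ disjoint_sdiff
  rw [disjoint_union_right, disjoint_biUnion_right] at hGsdiff
  obtain ⟨hGF₀, hGG'⟩ := hGsdiff
  refine ⟨m + 1, Fin.cons G G', F₀, Fin.cons X X', Fin.cons J J', ?_, Fin.cases hGF₀ hdisj₀, ?_,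
    Fin.cases hG hhom, Fin.cases hJ htype, hcard⟩
  · have hcons : univ.biUnion (Fin.cons G G' : Fin (m + 1) → _) = G ∪ univ.biUnion G' := by
      ext A
      simp [Fin.exists_fin_succ]
    rw [hcons, union_left_comm, hunion, union_sdiff_of_subset hGF]
  · refine Fin.cases (Fin.cases (absurd rfl) fun j _ => hGG' j (mem_univ j)) fun i =>
      Fin.cases (fun _ => (hGG' i (mem_univ i)).symm) fun j hij => ?_
    exact hdisj i j fun h => hij (congrArg Fin.succ h)

theorem IsHomogeneous.patRank_eq_and_isType1 (h : IsHomogeneous k s G X J) (hk : 4 ≤ k)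
    (hs : k * ℓ ≤ s) (hpath : ¬ ContainsLinearPath k ℓ G) (hG : n.choose (k - 2) < #G) :
    patRank k J = k - 1 ∧ IsType1 J := by
  have hcover (D : Finset (Fin k)) (hD : #D = k - 2) : ∃ B ∈ J, D ⊆ B := by
    by_contra! hD'
    exact hG.not_ge (hD ▸ h.card_le_choose hD')
  refine (patRank_eq_and_isType1_or_exists_two_singletons_mem hk
    (fun A hA B => h.inter_mem hA) (fun B => h.ne_univ) hcover).resolve_right ?_
  rintro ⟨a, b, hab, ha, hb⟩
  exact hpath (h.containsLinearPath (card_pos.1 (Nat.zero_lt_of_lt hG)) hs hab ha hb)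

end Partition

theorem canonical_partition_general (k s : ℕ) (hk : 4 ≤ k) (hs : 1 ≤ s) :
    ∃ c : ℝ, 0 < c ∧ ∀ ℓ, k * ℓ ≤ s → ∀ (n : ℕ) (F : Finset (Finset (Fin n))),
      (∀ A ∈ F, #A = k) → ¬ ContainsLinearPath k ℓ F →
        HasCanonicalPartition k s ((1 / c) * n.choose (k - 2)) F := by
  obtain ⟨c, hc, hfuredi⟩ := exists_isHomogeneous_subfamily k s (by omega) hs
  refine ⟨c, hc, fun ℓ hℓ n F hF hpath => ?_⟩
  induction F using Finset.strongInduction with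
  | H F ih =>
    obtain hsmall | hbig := le_or_gt (#F : ℝ) ((1 / c) * n.choose (k - 2))
    · exact hasCanonicalPartition_of_card_le hsmall
    obtain ⟨G, hGF, X, J, hhom, hcard⟩ := hfuredi n F hF
    have hG : n.choose (k - 2) < #G := by
      rw [one_div, inv_mul_lt_iff₀ hc] at hbig
      exact_mod_cast hbig.trans_le hcard
    have htype := hhom.patRank_eq_and_isType1 hk hℓ (fun h => hpath (h.mono hGF)) hG
    exact (ih (F \ G) (sdiff_ssubset hGF (card_pos.1 (Nat.zero_lt_of_lt hG)))
      (fun A hA => hF A (mem_sdiff.1 hA).1) fun h => hpath (h.mono sdiff_subset)).of_sdiff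
      hGF hhom htype

/-- Theorem 3.8 (canonical partition): for k ≥ 4 and s ≥ kℓ there is a constant
c = c(k,s) > 0 such that every family of k-sets with no linear path of length ℓ can be
partitioned into (k,s)-homogeneous families whose intersection patterns have rank k-1 and
type 1, plus a leftover family of size at most (1/c)·C(n,k-2). -/
theorem canonical_partition (k ℓ s : ℕ) (hk : 4 ≤ k) (hl : 1 ≤ ℓ) (hs : k * ℓ ≤ s) :
    ∃ c : ℝ, 0 < c ∧ ∀ (n : ℕ) (F : Finset (Finset (Fin n))),
      (∀ A ∈ F, A.card = k) → ¬ ContainsLinearPath k ℓ F →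
      ∃ (m : ℕ) (G : Fin m → Finset (Finset (Fin n))) (F₀ : Finset (Finset (Fin n)))
        (X : Fin m → Fin k → Finset (Fin n)) (J : Fin m → Finset (Finset (Fin k))),
        F₀ ∪ Finset.univ.biUnion G = F ∧
        (∀ i : Fin m, Disjoint (G i) F₀) ∧
        (∀ i j : Fin m, i ≠ j → Disjoint (G i) (G j)) ∧
        (∀ i : Fin m, IsHomogeneous k s (G i) (X i) (J i)) ∧
        (∀ i : Fin m, patRank k (J i) = k - 1 ∧ IsType1 (J i)) ∧
        (F₀.card : ℝ) ≤ (1 / c) * (n.choose (k - 2)) :=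
  let ⟨c, hc, h⟩ := canonical_partition_general k s hk (by nlinarith)
  ⟨c, hc, h ℓ hs⟩
end

section
/- Let F ⊆ binom([n],k) and suppose F is partitioned into subfamilies F_1,…,F_m such that each F_i is (k,s)-homogeneous with an intersection pattern J_i of rank k−1 and type 1. For F ∈ F_i, let c(F) denote the vertex of F in the part indexed by the central element of J_i. Let H' be the simple graph on [n] whose edge set is { {c(F), y} : F ∈ F, y ∈ F ∖ {c(F)} }. Then |F| ≤ (e(H')/(k−1)) · C(n−2,k−2). -/
open Finset

/-!
Double count the pairs `(e, A)` where `e` is an edge of the graph contained in the member `A` of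
the family. Each `A` contains the `k - 1` edges joining its central vertex to its other vertices,
while a fixed pair of vertices lies in at most `C(n - 2, k - 2)` sets of size `k`.
-/

theorem card_sub_one_le_card_filter_edgeFinset {V : Type*} [DecidableEq V] {H : SimpleGraph V}
    [Fintype H.edgeSet] {A : Finset V} {v : V} (hv : v ∈ A) (hadj : ∀ y ∈ A, y ≠ v → H.Adj v y) :
    #A - 1 ≤ #{e ∈ H.edgeFinset | e.toFinset ⊆ A} := by
  rw [← card_erase_of_mem hv]
  refine card_le_card_of_injOn (fun y => s(v, y)) ?_ fun _ _ _ _ => Sym2.congr_right.1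
  intro y hy
  obtain ⟨hyv, hyA⟩ := mem_erase.1 hy
  simp [hadj y hyA hyv, Sym2.toFinset_mk_eq, insert_subset_iff, hv, hyA]

section DoubleCounting

variable {V : Type*} [Fintype V] {k : ℕ} {F : Finset (Finset V)}

theorem card_filter_superset_le_choose [DecidableEq V] (hF : (F : Set (Finset V)).Sized k)
    (B : Finset V) :
    #{A ∈ F | B ⊆ A} ≤ (Fintype.card V - #B).choose (k - #B) := by
  rw [← card_compl, ← card_powersetCard]
  refine card_le_card_of_injOn (· \ B) ?mapsTo ?injOn
  case mapsTo =>
    intro A hA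
    obtain ⟨hAF, hBA⟩ := mem_filter.1 hA
    refine mem_powersetCard.2 ⟨?_, ?_⟩
    · exact subset_compl_iff_disjoint_right.2 sdiff_disjoint
    · rw [card_sdiff_of_subset hBA, hF hAF]
  case injOn =>
    intro A hA A' hA' (hAA' : A \ B = A' \ B)
    rw [← sdiff_union_of_subset (mem_filter.1 hA).2, hAA',
      sdiff_union_of_subset (mem_filter.1 hA').2]

theorem mul_card_le_card_edgeFinset_mul_choose [DecidableEq V]
    (hF : (F : Set (Finset V)).Sized k) (H : SimpleGraph V) [Fintype H.edgeSet] {d : ℕ}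
    (hd : ∀ A ∈ F, d ≤ #{e ∈ H.edgeFinset | e.toFinset ⊆ A}) :
    d * #F ≤ #H.edgeFinset * (Fintype.card V - 2).choose (k - 2) := by
  rw [mul_comm]
  refine card_mul_le_card_mul (fun A (e : Sym2 V) => e.toFinset ⊆ A) hd fun e he => ?_
  have card_edge : #e.toFinset = 2 :=
    Sym2.card_toFinset_of_not_isDiag e (H.not_isDiag_of_mem_edgeFinset he)
  simpa only [card_edge, bipartiteBelow] using card_filter_superset_le_choose hF e.toFinset

theorem kernel_graph_bound_general (hF : (F : Set (Finset V)).Sized k) (c : Finset V → V)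
    (hc : ∀ A ∈ F, c A ∈ A) (H : SimpleGraph V) [Fintype H.edgeSet]
    (hH : ∀ A ∈ F, ∀ y ∈ A, y ≠ c A → H.Adj (c A) y) :
    (k - 1) * #F ≤ #H.edgeFinset * (Fintype.card V - 2).choose (k - 2) := by
  classical
  exact mul_card_le_card_edgeFinset_mul_choose hF H fun A hA =>
    hF hA ▸ card_sub_one_le_card_filter_edgeFinset (hc A hA) (hH A hA)

end DoubleCounting

theorem IsHomogeneous.sized {k s n : ℕ} {G : Finset (Finset (Fin n))}
    {X : Fin k → Finset (Fin n)} {J : Finset (Finset (Fin k))} (hG : IsHomogeneous k s G X J) :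
    (G : Set (Finset (Fin n))).Sized k :=
  fun A hA => (hG.2.1 A hA).1

/-- Lemma 4.3: suppose F is partitioned into (k,s)-homogeneous families G i with
intersection patterns J i of rank k-1 and type 1, with central elements ci i, and let
c assign to each member A ∈ G i its central vertex (the unique vertex of A in the part
X i (ci i)). If H' is the simple graph on [n] whose edges are the pairs {c A, y} with
A ∈ F and y ∈ A ∖ {c A}, then (k-1)·|F| ≤ e(H')·C(n-2,k-2). -/
theorem kernel_graph_bound (k s n m : ℕ) (hk : 1 ≤ k) (hs : 1 ≤ s)
    (F : Finset (Finset (Fin n))) (G : Fin m → Finset (Finset (Fin n)))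
    (X : Fin m → Fin k → Finset (Fin n)) (J : Fin m → Finset (Finset (Fin k)))
    (hpart : Finset.univ.biUnion G = F)
    (hdisj : ∀ i j : Fin m, i ≠ j → Disjoint (G i) (G j))
    (hhom : ∀ i : Fin m, IsHomogeneous k s (G i) (X i) (J i))
    (hrank : ∀ i : Fin m, patRank k (J i) = k - 1 ∧ IsType1 (J i))
    (ci : Fin m → Fin k)
    (hci : ∀ i : Fin m, ∀ B : Finset (Fin k), B ≠ Finset.univ → ci i ∈ B → B ∈ J i)
    (c : Finset (Fin n) → Fin n)
    (hc : ∀ i : Fin m, ∀ A ∈ G i, c A ∈ A ∧ c A ∈ X i (ci i))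
    (H' : SimpleGraph (Fin n)) [DecidableRel H'.Adj]
    (hH' : ∀ x y : Fin n, H'.Adj x y ↔
      x ≠ y ∧ ∃ A ∈ F, (c A = x ∧ y ∈ A) ∨ (c A = y ∧ x ∈ A)) :
    (k - 1) * F.card ≤ H'.edgeFinset.card * (n - 2).choose (k - 2) := by
  have mem_part : ∀ A ∈ F, ∃ i, A ∈ G i := by simp [← hpart]
  have sized : (F : Set (Finset (Fin n))).Sized k := fun A hA =>
    let ⟨i, hi⟩ := mem_part A hA
    (hhom i).sized hi
  have central_mem : ∀ A ∈ F, c A ∈ A := fun A hA =>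
    let ⟨i, hi⟩ := mem_part A hA
    (hc i A hi).1
  have central_adj : ∀ A ∈ F, ∀ y ∈ A, y ≠ c A → H'.Adj (c A) y := fun A hA y hy hne =>
    (hH' _ _).2 ⟨hne.symm, A, hA, .inl ⟨rfl, hy⟩⟩
  simpa only [Fintype.card_fin] using kernel_graph_bound_general sized c central_mem H' central_adj
end

section
/- Let k ≥ 2 and ℓ ≥ 1 be integers. For every positive integer n, ex_k(n, P^{(k)}_ℓ) ≤ (k−1)(ℓ−1)·C(n−1,k−1); that is, every family F ⊆ binom([n],k) with |F| > (k−1)(ℓ−1)·C(n−1,k−1) contains a copy of the k-uniform linear path of length ℓ. -/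
open Finset

/-- The Turán number ex_k(n, P^{(k)}_ℓ): the maximum number of edges in a k-uniform
hypergraph on n vertices containing no linear path of length ℓ. -/
noncomputable def exLinear (k ℓ n : ℕ) : ℕ :=
  sSup {m : ℕ | ∃ F : Finset (Finset (Fin n)),
    (∀ A ∈ F, A.card = k) ∧ ¬ ContainsLinearPath k ℓ F ∧ F.card = m}

/-!
Let `F` be a family of `k`-sets without a linear path of length `ℓ`, put `d = (k - 1) * (ℓ - 1)`,
and call the number of vertices extending a `(k - 1)`-set to a member of a family its codegree.

If every set in the shadow of a nonempty subfamily had codegree more than `d`, a path could be grown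
greedily: a path with fewer than `ℓ` edges covers at most `d + 1` vertices, so an edge through its
endpoint can have its other vertices on the path exchanged, one at a time, for vertices off the
path. Hence every nonempty subfamily has a shadow set of codegree at most `d`, and `F` can be
dismantled by repeatedly deleting the at most `d` members through such a set.

Each deletion strictly lowers the rank of the span of the boundaries of the members over `ZMod 2`.
These boundaries are cycles, and a cycle is determined by its values on the sets avoiding a fixed
vertex, so the rank is at most `C(n - 1, k - 1)` and there are at most that many deletions.
-/

open scoped FinsetFamily

namespace LinearPathTuran

variable {α : Type*} [DecidableEq α]

section Boundary

variable [Fintype α]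

/-- The simplicial boundary modulo 2. A chain is a function `Finset α → ZMod 2`, so a single
edge `E` is the chain `Pi.single E 1`; chains of all dimensions are treated at once. -/
def boundary : (Finset α → ZMod 2) →ₗ[ZMod 2] (Finset α → ZMod 2) where
  toFun z S := ∑ y ∈ Sᶜ, z (insert y S)
  map_add' z w := by ext S; simp [sum_add_distrib]
  map_smul' c z := by ext S; simp [mul_sum]

lemma boundary_apply (z : Finset α → ZMod 2) (S : Finset α) :
    boundary z S = ∑ y ∈ Sᶜ, z (insert y S) := rfl

lemma boundary_boundary (z : Finset α → ZMod 2) : boundary (boundary z) = 0 := by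
  ext S
  simp only [boundary_apply, sum_sigma', Pi.zero_apply]
  -- The terms at `(x, y)` and `(y, x)` coincide, so they cancel modulo 2.
  refine sum_involution (fun p _ ↦ ⟨p.2, p.1⟩) (fun p _ ↦ ?_) (fun p hp _ ↦ ?_)
    (fun p hp ↦ ?_) (fun p _ ↦ rfl)
  · rw [insert_comm]
    exact CharTwo.add_self_eq_zero _
  · intro heq
    have : p.2 = p.1 := congrArg Sigma.fst heq
    simp [this] at hp
  · simp only [mem_sigma, mem_compl, mem_insert, not_or] at hp ⊢
    tauto

-- Coning with apex `x` is a contracting homotopy, so a cycle is determined away from `x`.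
lemma eq_zero_of_boundary_eq_zero {z : Finset α → ZMod 2} {x : α} (hz : boundary z = 0)
    (hx : ∀ D, x ∉ D → z D = 0) : z = 0 := by
  ext D
  by_cases hxD : x ∈ D
  · have hsum := congrFun hz (D.erase x)
    rw [boundary_apply, sum_eq_single x, insert_erase hxD] at hsum
    · exact hsum
    · intro y _ hyx
      exact hx _ (by simp [hyx.symm])
    · simp
  · exact hx D hxD

lemma boundary_single_apply_eq_zero {E D : Finset α} (h : ∀ y ∉ D, insert y D ≠ E) :
    boundary (Pi.single E 1) D = 0 :=
  sum_eq_zero fun y hy ↦ Pi.single_eq_of_ne (h y (mem_compl.1 hy)) 1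

lemma boundary_single_insert_apply {D : Finset α} {y : α} (hy : y ∉ D) :
    boundary (Pi.single (insert y D) 1) D = 1 := by
  rw [boundary_apply, sum_eq_single y, Pi.single_eq_same]
  · intro w hw hwy
    refine Pi.single_eq_of_ne (fun heq ↦ ?_) 1
    have : w ∈ insert y D := heq ▸ mem_insert_self w D
    simp_all
  · simp [hy]

/-- The space of chains spanned by the boundaries of the members of `F`. -/
def boundarySpan (F : Finset (Finset α)) : Submodule (ZMod 2) (Finset α → ZMod 2) :=
  Submodule.span (ZMod 2) ((fun E ↦ boundary (Pi.single E 1)) '' F)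

lemma boundary_single_mem_boundarySpan {F : Finset (Finset α)} {E : Finset α} (hE : E ∈ F) :
    boundary (Pi.single E 1) ∈ boundarySpan F :=
  Submodule.subset_span ⟨E, hE, rfl⟩

lemma boundarySpan_mono {F G : Finset (Finset α)} (h : F ⊆ G) : boundarySpan F ≤ boundarySpan G :=
  Submodule.span_mono (Set.image_mono (coe_subset.2 h))

lemma boundary_eq_zero_of_mem_boundarySpan {F : Finset (Finset α)} {z : Finset α → ZMod 2}
    (hz : z ∈ boundarySpan F) : boundary z = 0 := by
  suffices boundarySpan F ≤ LinearMap.ker boundary from this hz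
  rw [boundarySpan, Submodule.span_le]
  rintro _ ⟨E, -, rfl⟩
  exact boundary_boundary _

lemma apply_eq_zero_of_mem_boundarySpan {F : Finset (Finset α)} {D : Finset α}
    {z : Finset α → ZMod 2} (hD : D ∉ ∂ F) (hz : z ∈ boundarySpan F) : z D = 0 := by
  suffices boundarySpan F ≤ LinearMap.ker (LinearMap.proj D) from this hz
  rw [boundarySpan, Submodule.span_le]
  rintro _ ⟨E, hE, rfl⟩
  refine boundary_single_apply_eq_zero fun y hy heq ↦ hD ?_
  exact mem_shadow_iff_insert_mem.2 ⟨y, hy, heq ▸ hE⟩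

theorem finrank_boundarySpan_le [Nonempty α] {r : ℕ} {F : Finset (Finset α)}
    (hF : (F : Set (Finset α)).Sized (r + 1)) :
    Module.finrank (ZMod 2) (boundarySpan F) ≤ (Fintype.card α - 1).choose r := by
  obtain ⟨x⟩ := ‹Nonempty α›
  let T : Finset (Finset α) := powersetCard r (univ.erase x)
  let restrict : boundarySpan F →ₗ[ZMod 2] (T → ZMod 2) :=
    LinearMap.funLeft (ZMod 2) (ZMod 2) Subtype.val ∘ₗ (boundarySpan F).subtype
  have restrict_injective : Function.Injective restrict := by
    rw [← LinearMap.ker_eq_bot, LinearMap.ker_eq_bot']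
    rintro ⟨z, hz⟩ hrestrict
    refine Subtype.ext (eq_zero_of_boundary_eq_zero (x := x)
      (boundary_eq_zero_of_mem_boundarySpan hz) fun D hxD ↦ ?_)
    by_cases hD : #D = r
    · have hDT : D ∈ T := mem_powersetCard.2 ⟨subset_erase.2 ⟨subset_univ D, hxD⟩, hD⟩
      exact congrFun hrestrict ⟨D, hDT⟩
    · exact apply_eq_zero_of_mem_boundarySpan (fun hmem ↦ hD (hF.shadow hmem)) hz
  calc Module.finrank (ZMod 2) (boundarySpan F)
      ≤ Module.finrank (ZMod 2) (T → ZMod 2) :=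
        LinearMap.finrank_le_finrank_of_injective restrict_injective
    _ = #T := by rw [Module.finrank_fintype_fun_eq_card, Fintype.card_coe]
    _ = (Fintype.card α - 1).choose r := by
        rw [card_powersetCard, card_erase_of_mem (mem_univ x), card_univ]

end Boundary

section Codegree

variable [Fintype α] {F : Finset (Finset α)} {d : ℕ}

/-- The vertices that extend `D` to a member of `F`; their number is the codegree of `D` in `F`. -/
def extensions (F : Finset (Finset α)) (D : Finset α) : Finset α :=
  {y ∈ Dᶜ | insert y D ∈ F}

lemma mem_extensions {D : Finset α} {y : α} : y ∈ extensions F D ↔ y ∉ D ∧ insert y D ∈ F := by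
  simp [extensions]

lemma finrank_boundarySpan_lt {G : Finset (Finset α)} {D : Finset α} (hGF : G ⊆ F)
    (hDF : D ∈ ∂ F) (hDG : D ∉ ∂ G) :
    Module.finrank (ZMod 2) (boundarySpan G) < Module.finrank (ZMod 2) (boundarySpan F) := by
  obtain ⟨y, hy, hyF⟩ := mem_shadow_iff_insert_mem.1 hDF
  refine Submodule.finrank_lt_finrank_of_lt <| SetLike.lt_iff_le_and_exists.2
    ⟨boundarySpan_mono hGF, _, boundary_single_mem_boundarySpan hyF, fun hmem ↦ ?_⟩
  have hzero := apply_eq_zero_of_mem_boundarySpan hDG hmem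
  rw [boundary_single_insert_apply hy] at hzero
  exact one_ne_zero hzero

-- Deleting all members through a face of small codegree costs at most `d` members and lowers the
-- rank, because no remaining boundary charges that face.
theorem card_le_mul_finrank_boundarySpan
    (hF : ∀ G ⊆ F, G.Nonempty → ∃ D ∈ ∂ G, #(extensions G D) ≤ d) :
    #F ≤ d * Module.finrank (ZMod 2) (boundarySpan F) := by
  induction F using Finset.strongInduction with
  | H F ih =>
    rcases F.eq_empty_or_nonempty with rfl | hne
    · simp
    obtain ⟨D, hD, hcard⟩ := hF F subset_rfl hne
    let removed := (extensions F D).image (insert · D)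
    have hsub : F \ removed ⊆ F := sdiff_subset
    have hD_rest : D ∉ ∂ (F \ removed) := by
      intro hmem
      obtain ⟨y, hy, hyF⟩ := mem_shadow_iff_insert_mem.1 hmem
      obtain ⟨hyF, hy_removed⟩ := mem_sdiff.1 hyF
      exact hy_removed (mem_image_of_mem _ (mem_extensions.2 ⟨hy, hyF⟩))
    have hssub : F \ removed ⊂ F := hsub.ssubset_of_ne fun heq ↦ hD_rest (heq.symm ▸ hD)
    calc #F ≤ #(F \ removed) + #removed := card_le_card_sdiff_add_card
      _ ≤ d * Module.finrank (ZMod 2) (boundarySpan (F \ removed)) + d :=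
        add_le_add (ih _ hssub fun G hG ↦ hF G (hG.trans hsub)) (card_image_le.trans hcard)
      _ = d * (Module.finrank (ZMod 2) (boundarySpan (F \ removed)) + 1) := by ring
      _ ≤ d * Module.finrank (ZMod 2) (boundarySpan F) :=
        Nat.mul_le_mul_left d (finrank_boundarySpan_lt hsub hD hD_rest)

lemma exists_mem_inter_ssubset {U A : Finset α} {u v : α}
    (hdeg : ∀ D ∈ ∂ F, d < #(extensions F D)) (hU : #U ≤ d + 1) (hvU : v ∈ U) (hA : A ∈ F)
    (hvA : v ∈ A) (hu : u ∈ A ∩ U) (huv : u ≠ v) : ∃ B ∈ F, v ∈ B ∧ B ∩ U ⊂ A ∩ U := by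
  have hvD : v ∈ A.erase u := mem_erase.2 ⟨huv.symm, hvA⟩
  have hcard : #(U.erase v) < #(extensions F (A.erase u)) := by
    have := hdeg _ (erase_mem_shadow hA (mem_inter.1 hu).1)
    rw [card_erase_of_mem hvU]
    omega
  obtain ⟨w, hw, hwU⟩ := exists_mem_notMem_of_card_lt_card hcard
  obtain ⟨hwD, hwF⟩ := mem_extensions.1 hw
  have hw_notMem : w ∉ U := fun h ↦ hwU (mem_erase.2 ⟨fun hwv ↦ hwD (hwv ▸ hvD), h⟩)
  refine ⟨insert w (A.erase u), hwF, mem_insert_of_mem hvD, ?_⟩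
  rw [insert_inter_of_notMem hw_notMem, erase_inter]
  exact erase_ssubset hu

theorem exists_mem_inter_eq_singleton {U : Finset α} {v : α}
    (hdeg : ∀ D ∈ ∂ F, d < #(extensions F D)) (hU : #U ≤ d + 1) (hvU : v ∈ U)
    (hv : ∃ E ∈ F, v ∈ E) : ∃ A ∈ F, A ∩ U = {v} := by
  obtain ⟨E, hE, hvE⟩ := hv
  obtain ⟨A, hA, hmin⟩ := exists_min_image {E ∈ F | v ∈ E} (fun E ↦ #(E ∩ U))
    ⟨E, mem_filter.2 ⟨hE, hvE⟩⟩
  obtain ⟨hAF, hvA⟩ := mem_filter.1 hA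
  refine ⟨A, hAF, eq_singleton_iff_unique_mem.2 ⟨mem_inter.2 ⟨hvA, hvU⟩, ?_⟩⟩
  by_contra! ⟨u, hu, huv⟩
  obtain ⟨B, hBF, hvB, hlt⟩ := exists_mem_inter_ssubset hdeg hU hvU hAF hvA hu huv
  exact (card_lt_card hlt).not_ge (hmin B (mem_filter.2 ⟨hBF, hvB⟩))

end Codegree

section LinearPath

/-- Consecutive sets of the sequence `P` meet in exactly one vertex and all other pairs are
disjoint. The sets may have any sizes. -/
structure IsLinearPath {ℓ : ℕ} (P : Fin ℓ → Finset α) : Prop where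
  card_inter : ∀ i j : Fin ℓ, (i : ℕ) + 1 = j → #(P i ∩ P j) = 1
  inter_eq_empty : ∀ i j : Fin ℓ, (i : ℕ) + 1 < j → P i ∩ P j = ∅

namespace IsLinearPath

variable {ℓ : ℕ}

lemma singleton (A : Finset α) : IsLinearPath fun _ : Fin 1 ↦ A where
  card_inter i j h := by omega
  inter_eq_empty i j h := by omega

lemma cons {P : Fin (ℓ + 1) → Finset α} {A : Finset α} {v : α} (hP : IsLinearPath P)
    (hv_head : v ∈ P 0) (hv_tail : ∀ i : Fin ℓ, v ∉ P i.succ)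
    (hA : A ∩ univ.biUnion P = {v}) : IsLinearPath (Fin.cons A P : Fin (ℓ + 2) → Finset α) := by
  have hA_inter (i : Fin (ℓ + 1)) : A ∩ P i ⊆ {v} :=
    hA ▸ inter_subset_inter_left (subset_biUnion_of_mem P (mem_univ i))
  have hvA : v ∈ A := (mem_inter.1 (hA ▸ mem_singleton_self v : v ∈ A ∩ _)).1
  constructor
  · intro i j hij
    cases j using Fin.cases with
    | zero => simp at hij
    | succ j =>
      cases i using Fin.cases with
      | zero =>
        obtain rfl : j = 0 := Fin.ext (by simpa using hij.symm)
        have : A ∩ P 0 = {v} := (hA_inter 0).antisymm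
          (singleton_subset_iff.2 (mem_inter.2 ⟨hvA, hv_head⟩))
        simp [this]
      | succ i => exact hP.card_inter i j (by simpa using hij)
  · intro i j hij
    cases j using Fin.cases with
    | zero => simp at hij
    | succ j =>
      cases i using Fin.cases with
      | zero =>
        obtain ⟨j, rfl⟩ := Fin.exists_succ_eq.2 (show j ≠ 0 by rintro rfl; simp at hij)
        refine eq_empty_of_forall_notMem fun y hy ↦ hv_tail j ?_
        exact mem_singleton.1 (hA_inter _ hy) ▸ (mem_inter.1 hy).2
      | succ i => exact hP.inter_eq_empty i j (by simpa using hij)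

lemma injective {P : Fin ℓ → Finset α} (hP : IsLinearPath P) (hcard : ∀ i, 1 < #(P i)) :
    Function.Injective P := by
  refine Function.Injective.of_lt_imp_ne fun i j hij heq ↦ (hcard i).not_ge ?_
  have hinter : P i ∩ P j = P i := by rw [← heq, inter_self]
  rw [← hinter]
  rcases (Nat.succ_le_of_lt hij).eq_or_lt with hij | hij
  · exact (hP.card_inter i j hij).le
  · simp [hP.inter_eq_empty i j hij]

end IsLinearPath

lemma biUnion_fin_cons {ℓ : ℕ} (A : Finset α) (P : Fin ℓ → Finset α) :
    univ.biUnion (Fin.cons A P : Fin (ℓ + 1) → Finset α) = A ∪ univ.biUnion P := by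
  ext y
  simp [Fin.exists_fin_succ]

variable [Fintype α] {F : Finset (Finset α)} {r : ℕ}

-- The path grows at its head, from a vertex `v` of the first edge on no other edge.
theorem exists_isLinearPath_of_lt_card_extensions {d : ℕ} (hr : 0 < r)
    (hF : (F : Set (Finset α)).Sized (r + 1)) (hne : F.Nonempty)
    (hdeg : ∀ D ∈ ∂ F, d < #(extensions F D)) (ℓ : ℕ) (hℓ : r * ℓ ≤ d) :
    ∃ P : Fin (ℓ + 1) → Finset α, IsLinearPath P ∧ (∀ i, P i ∈ F) ∧
      #(univ.biUnion P) = r * (ℓ + 1) + 1 ∧ ∃ v ∈ P 0, ∀ i : Fin ℓ, v ∉ P i.succ := by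
  induction ℓ with
  | zero =>
    obtain ⟨E, hE⟩ := hne
    obtain ⟨v, hv⟩ : E.Nonempty := card_pos.1 (by rw [hF hE]; omega)
    exact ⟨fun _ ↦ E, .singleton E, fun _ ↦ hE, by simp [hF hE], v, hv, fun i ↦ i.elim0⟩
  | succ ℓ ih =>
    obtain ⟨P, hP, hPF, hcard, v, hv_head, hv_tail⟩ :=
      ih ((Nat.mul_le_mul_left r ℓ.le_succ).trans hℓ)
    set U := univ.biUnion P
    have hvU : v ∈ U := mem_biUnion.2 ⟨0, mem_univ 0, hv_head⟩
    obtain ⟨A, hAF, hAU⟩ := exists_mem_inter_eq_singleton hdeg (by omega) hvU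
      ⟨P 0, hPF 0, hv_head⟩
    obtain ⟨w, hwA, hwv⟩ : ∃ w ∈ A, w ≠ v := exists_mem_ne (by rw [hF hAF]; omega) v
    have hwU : w ∉ U := fun h ↦ hwv (mem_singleton.1 (hAU ▸ mem_inter.2 ⟨hwA, h⟩))
    refine ⟨Fin.cons A P, hP.cons hv_head hv_tail hAU, Fin.cases hAF hPF, ?_, w, hwA, fun i hi ↦
      hwU (mem_biUnion.2 ⟨i, mem_univ i, hi⟩)⟩
    have hcard_union := card_union_add_card_inter A U
    rw [hAU, card_singleton, hF hAF, hcard] at hcard_union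
    rw [biUnion_fin_cons]
    linarith

theorem card_le_of_forall_not_isLinearPath [Nonempty α] {ℓ : ℕ} (hr : 0 < r)
    (hF : (F : Set (Finset α)).Sized (r + 1))
    (hfree : ∀ P : Fin (ℓ + 1) → Finset α, (∀ i, P i ∈ F) → ¬ IsLinearPath P) :
    #F ≤ r * ℓ * (Fintype.card α - 1).choose r := by
  refine (card_le_mul_finrank_boundarySpan fun G hGF hne ↦ ?_).trans
    (Nat.mul_le_mul_left _ (finrank_boundarySpan_le hF))
  by_contra! hdeg
  obtain ⟨P, hP, hPG, -⟩ := exists_isLinearPath_of_lt_card_extensions hr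
    (hF.mono (coe_subset.2 hGF)) hne hdeg ℓ le_rfl
  exact hfree P (fun i ↦ hGF (hPG i)) hP

end LinearPath

lemma containsLinearPath_of_isLinearPath {k ℓ n : ℕ} {F : Finset (Finset (Fin n))} (hk : 2 ≤ k)
    (hF : (F : Set (Finset (Fin n))).Sized k) {P : Fin ℓ → Finset (Fin n)}
    (hP : IsLinearPath P) (hPF : ∀ i, P i ∈ F) : ContainsLinearPath k ℓ F :=
  have hcard : ∀ i, #(P i) = k := fun i ↦ hF (hPF i)
  ⟨P, hP.injective fun i ↦ by rw [hcard]; omega, hPF, hcard, hP.card_inter, hP.inter_eq_empty⟩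

theorem card_le_of_not_containsLinearPath {k ℓ n : ℕ} {F : Finset (Finset (Fin n))} (hk : 2 ≤ k)
    (hl : 1 ≤ ℓ) (hn : 0 < n) (hF : (F : Set (Finset (Fin n))).Sized k)
    (hfree : ¬ ContainsLinearPath k ℓ F) :
    #F ≤ (k - 1) * (ℓ - 1) * (n - 1).choose (k - 1) := by
  obtain ⟨r, rfl⟩ := Nat.exists_eq_add_of_le' (one_le_two.trans hk)
  obtain ⟨m, rfl⟩ := Nat.exists_eq_add_of_le' hl
  have : Nonempty (Fin n) := ⟨⟨0, hn⟩⟩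
  simpa using card_le_of_forall_not_isLinearPath (by omega) hF
    fun P hPF hP ↦ hfree (containsLinearPath_of_isLinearPath hk hF hP hPF)

end LinearPathTuran

/-- Equation (1): for every n, ex_k(n, P^{(k)}_ℓ) ≤ (k-1)(ℓ-1)·C(n-1,k-1); that is,
every k-uniform family on [n] with more than (k-1)(ℓ-1)·C(n-1,k-1) members contains a
linear path of length ℓ. -/
theorem turan_linear_path_all_n (k ℓ : ℕ) (hk : 2 ≤ k) (hl : 1 ≤ ℓ) (n : ℕ) (hn : 0 < n) :
    exLinear k ℓ n ≤ (k - 1) * (ℓ - 1) * ((n - 1).choose (k - 1)) ∧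
    ∀ F : Finset (Finset (Fin n)), (∀ A ∈ F, A.card = k) →
      (k - 1) * (ℓ - 1) * ((n - 1).choose (k - 1)) < F.card →
      ContainsLinearPath k ℓ F := by
  have bound (F : Finset (Finset (Fin n))) (hF : ∀ A ∈ F, A.card = k) :
      ¬ ContainsLinearPath k ℓ F → F.card ≤ (k - 1) * (ℓ - 1) * (n - 1).choose (k - 1) :=
    LinearPathTuran.card_le_of_not_containsLinearPath hk hl hn hF
  constructor
  · refine csSup_le' ?_
    rintro m ⟨F, hF, hfree, rfl⟩
    exact bound F hF hfree
  · intro F hF hlt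
    by_contra hfree
    exact (bound F hF hfree).not_gt hlt
end
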